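/- arXiv:2601.23239 — 3 statements merged into one kernel-verified Lean document; each statement's English description precedes it below -/
import Mathlib

section
/- Let ρ ∈ (0, 1) and set k = ρ/√(1 − ρ²). Let W₁, W₂ be independent standard normal random variables and put Z₁ = W₁ and Z₂ = ρW₁ + √(1 − ρ²)·W₂ (so Z₁, Z₂ are standard normals with correlation ρ). Then there exist constants C > 0 and t₀ > 0 such that for all t ≥ t₀: | P(Z₁ ≥ t and Z₂ ≥ ρt) − φ(t)·( 1/(2t) + k/(√(2π) t²) − 1/(2t³) ) | ≤ C·φ(t)/t⁴. -/
open MeasureTheory ProbabilityTheory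

/-- The standard normal density `φ(s) = exp(−s²/2)/√(2π)`. -/
noncomputable def stdNormalPDF (s : ℝ) : ℝ := Real.exp (-s ^ 2 / 2) / Real.sqrt (2 * Real.pi)

lemma aux_pdf (x : ℝ) : gaussianPDFReal 0 1 x = stdNormalPDF x := by
  simp [gaussianPDFReal, stdNormalPDF, div_eq_mul_inv]
  ring

lemma aux_pdf_add (t u : ℝ) :
    stdNormalPDF (u + t) = stdNormalPDF t * (Real.exp (-(t * u)) * Real.exp (-u ^ 2 / 2)) := by
  unfold stdNormalPDF
  rw [← Real.exp_add, div_mul_eq_mul_div, ← Real.exp_add]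
  congr 2
  ring

/-- `P(W ≥ -v)` for a standard normal `W`. -/
noncomputable def auxF (v : ℝ) : ℝ := (gaussianReal 0 1 (Set.Ici (-v))).toReal

lemma aux_half : (gaussianReal 0 1 (Set.Ici 0)).toReal = 1 / 2 := by
  have h1 : gaussianReal 0 1 (Set.Iio 0) = gaussianReal 0 1 (Set.Ici 0) := by
    have h := gaussianReal_map_neg (μ := 0) (v := 1)
    rw [neg_zero] at h
    have : NullSingletonClass (gaussianReal 0 1) := nullSingletonClass_gaussianReal one_ne_zero
    have h0 : gaussianReal 0 1 (Set.Iio 0) = gaussianReal 0 1 (Set.Iic 0) :=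
      measure_congr Iio_ae_eq_Iic
    rw [h0]
    nth_rewrite 1 [← h]
    rw [Measure.map_apply measurable_neg measurableSet_Iic]
    simp
  have h2 : (gaussianReal 0 1) (Set.Ici 0) + (gaussianReal 0 1) (Set.Ici (0:ℝ))ᶜ = 1 := by
    rw [measure_add_measure_compl measurableSet_Ici, measure_univ]
  rw [Set.compl_Ici, h1] at h2
  have h3 := congrArg ENNReal.toReal h2
  rw [ENNReal.toReal_add (measure_ne_top _ _) (measure_ne_top _ _)] at h3
  simp at h3
  linarith

lemma aux_exp1 (w : ℝ) (hw : 0 ≤ w) : |Real.exp (-w) - 1| ≤ w := by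
  have h1 := Real.add_one_le_exp (-w)
  have h2 : Real.exp (-w) ≤ 1 := Real.exp_le_one_iff.mpr (by linarith)
  rw [abs_le]; constructor <;> linarith

lemma aux_exp2 (w : ℝ) (hw : 0 ≤ w) : |Real.exp (-w) - 1 + w| ≤ w ^ 2 := by
  have h1 := Real.add_one_le_exp (-w)
  have h2 : Real.exp (-w) ≤ 1 - w + w ^ 2 := by
    have h3 := Real.add_one_le_exp w
    have h4 : Real.exp (-w) * Real.exp w = 1 := by rw [← Real.exp_add]; simp
    have h5 := Real.exp_pos (-w)
    have h6 : Real.exp (-w) * (1 + w) ≤ 1 := by nlinarith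
    have h7 : (1 : ℝ) ≤ (1 - w + w ^ 2) * (1 + w) := by nlinarith [pow_nonneg hw 3]
    exact le_of_mul_le_mul_right (h6.trans h7) (by linarith)
  rw [abs_le]; constructor <;> nlinarith

lemma aux_cont : Continuous stdNormalPDF := by
  unfold stdNormalPDF; fun_prop

lemma auxF_bound (v : ℝ) (hv : 0 ≤ v) :
    |auxF v - (1 / 2 + v / Real.sqrt (2 * Real.pi))| ≤ v ^ 3 := by
  have hs1 : 1 ≤ Real.sqrt (2 * Real.pi) := by
    rw [Real.one_le_sqrt]; nlinarith [Real.pi_gt_three]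
  have hsplit : auxF v = (gaussianReal 0 1 (Set.Ico (-v) 0)).toReal + 1 / 2 := by
    unfold auxF
    rw [← aux_half, ← ENNReal.toReal_add (measure_ne_top _ _) (measure_ne_top _ _),
      ← measure_union _ measurableSet_Ici, Set.Ico_union_Ici_eq_Ici (by linarith)]
    rw [Set.disjoint_left]
    intro x hx hx'
    exact absurd hx.2 (not_lt.mpr hx')
  have hI : (gaussianReal 0 1 (Set.Ico (-v) 0)).toReal = ∫ x in (-v)..0, stdNormalPDF x := by
    rw [gaussianReal_apply_eq_integral _ one_ne_zero, ENNReal.toReal_ofReal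
      (integral_nonneg fun x => gaussianPDFReal_nonneg _ _ _), integral_Ico_eq_integral_Ioc,
      intervalIntegral.integral_of_le (by linarith)]
    simp_rw [aux_pdf]
  have hc : v / Real.sqrt (2 * Real.pi) = ∫ x in (-v)..0, 1 / Real.sqrt (2 * Real.pi) := by
    simp [div_eq_mul_inv]
    ring
  have hd : auxF v - (1 / 2 + v / Real.sqrt (2 * Real.pi)) =
      ∫ x in (-v)..0, (stdNormalPDF x - 1 / Real.sqrt (2 * Real.pi)) := by
    rw [intervalIntegral.integral_sub (aux_cont.intervalIntegrable _ _)
      (continuous_const.intervalIntegrable _ _), ← hc, ← hI, hsplit]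
    ring
  rw [hd, ← Real.norm_eq_abs]
  have := intervalIntegral.norm_integral_le_of_norm_le_const (a := -v) (b := 0) (C := v ^ 2)
    (f := fun x => stdNormalPDF x - 1 / Real.sqrt (2 * Real.pi)) ?_
  · refine this.trans (le_of_eq ?_)
    rw [zero_sub, neg_neg, abs_of_nonneg hv]; ring
  · intro x hx
    rw [Set.uIoc_of_le (by linarith)] at hx
    have e := aux_exp1 (x ^ 2 / 2) (by positivity)
    rw [Real.norm_eq_abs, stdNormalPDF, ← sub_div, abs_div, abs_of_pos (by linarith : 0 < Real.sqrt (2 * Real.pi)),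
      neg_div]
    refine (div_le_self (abs_nonneg _) hs1).trans (e.trans ?_)
    nlinarith [hx.1, hx.2]

lemma auxF_nonneg (v : ℝ) : 0 ≤ auxF v := ENNReal.toReal_nonneg

lemma auxF_le_one (v : ℝ) : auxF v ≤ 1 := by
  unfold auxF
  have := ENNReal.toReal_mono ENNReal.one_ne_top (prob_le_one (μ := gaussianReal 0 1) (s := Set.Ici (-v)))
  simpa using this

lemma auxF_mono : Monotone auxF := by
  intro a b h
  exact ENNReal.toReal_mono (measure_ne_top _ _)
    (measure_mono (Set.Ici_subset_Ici.mpr (by linarith)))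

lemma aux_int (n : ℕ) (t : ℝ) (ht : 0 < t) :
    IntegrableOn (fun u : ℝ => Real.exp (-(t * u)) * u ^ n) (Set.Ioi 0) ∧
    ∫ u in Set.Ioi (0 : ℝ), Real.exp (-(t * u)) * u ^ n = (n.factorial : ℝ) / t ^ (n + 1) := by
  constructor
  · have := integrableOn_rpow_mul_exp_neg_mul_rpow (p := 1) (s := n) (b := t)
      (by have : (0 : ℝ) ≤ n := n.cast_nonneg
          linarith) one_pos ht
    refine this.congr_fun (fun u hu => ?_) measurableSet_Ioi
    simp [mul_comm]
  · have := Real.integral_rpow_mul_exp_neg_mul_Ioi (a := n + 1) (r := t) (by positivity) ht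
    rw [add_sub_cancel_right, Real.Gamma_nat_eq_factorial] at this
    simp_rw [Real.rpow_natCast] at this
    simp_rw [mul_comm (Real.exp _)]
    rw [this]
    have h2 : (1 / t) ^ ((n : ℝ) + 1) = (1 / t) ^ (n + 1) := by
      rw [← Real.rpow_natCast]; push_cast; rfl
    rw [h2, one_div, inv_pow, div_eq_mul_inv, mul_comm]

lemma aux_prob {Ω : Type*} [MeasurableSpace Ω] (μ : Measure Ω) [IsProbabilityMeasure μ]
    (ρ : ℝ) (hρ0 : 0 < ρ) (hρ1 : ρ < 1)
    (W₁ W₂ : Ω → ℝ) (hW₁ : Measurable W₁) (hW₂ : Measurable W₂)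
    (hlaw₁ : μ.map W₁ = gaussianReal 0 1) (hlaw₂ : μ.map W₂ = gaussianReal 0 1)
    (hindep : IndepFun W₁ W₂ μ) (t : ℝ) :
    (μ {ω | t ≤ W₁ ω ∧ ρ * t ≤ ρ * W₁ ω + Real.sqrt (1 - ρ ^ 2) * W₂ ω}).toReal =
    stdNormalPDF t * ∫ u in Set.Ioi (0 : ℝ), Real.exp (-(t * u)) *
      (Real.exp (-u ^ 2 / 2) * auxF (ρ / Real.sqrt (1 - ρ ^ 2) * u)) := by
  have hs : 0 < Real.sqrt (1 - ρ ^ 2) := Real.sqrt_pos.mpr (by nlinarith)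
  set s := Real.sqrt (1 - ρ ^ 2) with hsdef
  have hS : MeasurableSet {p : ℝ × ℝ | t ≤ p.1 ∧ ρ * t ≤ ρ * p.1 + s * p.2} := by
    apply MeasurableSet.inter
    · exact measurableSet_le measurable_const measurable_fst
    · exact measurableSet_le (f := fun _ : ℝ × ℝ => ρ * t)
        (g := fun p : ℝ × ℝ => ρ * p.1 + s * p.2) measurable_const (by fun_prop)
  have hmap := (indepFun_iff_map_prod_eq_prod_map_map hW₁.aemeasurable hW₂.aemeasurable).mp hindep
  have h1 : μ {ω | t ≤ W₁ ω ∧ ρ * t ≤ ρ * W₁ ω + s * W₂ ω} =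
      ((gaussianReal 0 1).prod (gaussianReal 0 1))
        {p : ℝ × ℝ | t ≤ p.1 ∧ ρ * t ≤ ρ * p.1 + s * p.2} := by
    rw [hlaw₁, hlaw₂] at hmap
    rw [← hmap, Measure.map_apply (hW₁.prodMk hW₂) hS]
    rfl
  rw [h1, Measure.prod_apply hS, ← integral_toReal
    (measurable_measure_prodMk_left hS).aemeasurable
    (Filter.Eventually.of_forall fun x => measure_lt_top _ _),
    integral_gaussianReal_eq_integral_smul one_ne_zero,
    ← integral_add_right_eq_self _ t, ← integral_const_mul, ← integral_Ici_eq_integral_Ioi,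
    ← integral_indicator measurableSet_Ici]
  congr 1
  ext u
  by_cases hu : 0 ≤ u
  · rw [Set.indicator_of_mem (Set.mem_Ici.mpr hu), aux_pdf, aux_pdf_add, auxF, smul_eq_mul]
    have : Prod.mk (u + t) ⁻¹' {p : ℝ × ℝ | t ≤ p.1 ∧ ρ * t ≤ ρ * p.1 + s * p.2} =
        Set.Ici (-(ρ / s * u)) := by
      ext y
      simp only [Set.mem_preimage, Set.mem_ofPred_eq, Set.mem_Ici]
      have e : ρ * (u + t) + s * y - ρ * t = s * (y + ρ / s * u) := by field_simp; ring
      constructor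
      · rintro ⟨_, h⟩
        have : 0 ≤ s * (y + ρ / s * u) := by linarith
        have := nonneg_of_mul_nonneg_right this hs
        linarith
      · intro h
        have : 0 ≤ s * (y + ρ / s * u) := mul_nonneg hs.le (by linarith)
        exact ⟨by linarith, by linarith⟩
    rw [this]
    ring
  · rw [Set.indicator_of_notMem (by simpa using hu)]
    have : Prod.mk (u + t) ⁻¹' {p : ℝ × ℝ | t ≤ p.1 ∧ ρ * t ≤ ρ * p.1 + s * p.2} = ∅ := by
      ext y
      simp only [Set.mem_preimage, Set.mem_ofPred_eq, Set.mem_empty_iff_false, iff_false]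
      rintro ⟨h, _⟩
      exact hu (by linarith)
    rw [this]
    simp

lemma aux_point (k u : ℝ) (hk : 0 < k) (hu : 0 ≤ u) :
    |Real.exp (-u ^ 2 / 2) * auxF (k * u) -
      (1 / 2 + k / Real.sqrt (2 * Real.pi) * u - 1 / 4 * u ^ 2)| ≤
      (k + k ^ 3) * u ^ 3 + u ^ 4 := by
  have hs1 : 1 ≤ Real.sqrt (2 * Real.pi) := by
    rw [Real.one_le_sqrt]; nlinarith [Real.pi_gt_three]
  have hE1 := aux_exp1 (u ^ 2 / 2) (by positivity)
  have hE2 := aux_exp2 (u ^ 2 / 2) (by positivity)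
  have hr := auxF_bound (k * u) (by positivity)
  rw [neg_div]
  have hEp := Real.exp_pos (-(u ^ 2 / 2))
  have hEl : Real.exp (-(u ^ 2 / 2)) ≤ 1 := Real.exp_le_one_iff.mpr (by nlinarith)
  set E := Real.exp (-(u ^ 2 / 2))
  set c := k / Real.sqrt (2 * Real.pi) with hc
  have hc0 : 0 ≤ c := by positivity
  have hck : c ≤ k := div_le_self hk.le hs1
  have hcu : k * u / Real.sqrt (2 * Real.pi) = c * u := by rw [hc]; ring
  rw [hcu] at hr
  set r := auxF (k * u) - (1 / 2 + c * u) with hrdef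
  have hid : E * auxF (k * u) - (1 / 2 + c * u - 1 / 4 * u ^ 2) =
      (E - 1 + u ^ 2 / 2) * (1 / 2) + (E - 1) * (c * u) + E * r := by
    rw [hrdef]; ring
  rw [hid]
  refine (abs_add_three _ _ _).trans ?_
  rw [abs_mul, abs_mul (E - 1) (c * u), abs_mul E r, abs_of_pos hEp, abs_of_nonneg (mul_nonneg hc0 hu),
    abs_of_pos (by norm_num : (0 : ℝ) < 1 / 2)]
  have a1 : |E - 1 + u ^ 2 / 2| * (1 / 2) ≤ u ^ 4 := by
    have : (u ^ 2 / 2) ^ 2 = u ^ 4 / 4 := by ring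
    nlinarith [pow_nonneg hu 4]
  have a2 : |E - 1| * (c * u) ≤ k * u ^ 3 := by
    calc |E - 1| * (c * u) ≤ u ^ 2 / 2 * (k * u) := by gcongr
      _ ≤ k * u ^ 3 := by nlinarith [mul_nonneg hk.le (pow_nonneg hu 3)]
  have a3 : E * |r| ≤ k ^ 3 * u ^ 3 := by
    calc E * |r| ≤ 1 * (k * u) ^ 3 := by gcongr
      _ = k ^ 3 * u ^ 3 := by ring
  linarith

lemma aux_main (k : ℝ) (hk : 0 < k) (t : ℝ) (ht : 1 ≤ t) :
    |(∫ u in Set.Ioi (0 : ℝ), Real.exp (-(t * u)) * (Real.exp (-u ^ 2 / 2) * auxF (k * u))) -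
      (1 / (2 * t) + k / (Real.sqrt (2 * Real.pi) * t ^ 2) - 1 / (2 * t ^ 3))| ≤
      (6 * (k + k ^ 3) + 24) / t ^ 4 := by
  have ht0 : 0 < t := by linarith
  obtain ⟨i0, v0⟩ := aux_int 0 t ht0
  obtain ⟨i1, v1⟩ := aux_int 1 t ht0
  obtain ⟨i2, v2⟩ := aux_int 2 t ht0
  obtain ⟨i3, v3⟩ := aux_int 3 t ht0
  obtain ⟨i4, v4⟩ := aux_int 4 t ht0
  set c := k / Real.sqrt (2 * Real.pi) with hc
  have hm : Measurable (fun u : ℝ => auxF (k * u)) :=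
    auxF_mono.measurable.comp (measurable_const.mul measurable_id)
  have ig : IntegrableOn (fun u : ℝ => Real.exp (-(t * u)) *
      (Real.exp (-u ^ 2 / 2) * auxF (k * u))) (Set.Ioi 0) := by
    refine Integrable.mono' i0 ?_ ?_
    · exact Measurable.aestronglyMeasurable (by fun_prop)
    · refine Filter.Eventually.of_forall fun u => ?_
      rw [Real.norm_eq_abs, abs_of_nonneg
        (mul_nonneg (Real.exp_pos _).le (mul_nonneg (Real.exp_pos _).le (auxF_nonneg _))), pow_zero]
      gcongr
      have : Real.exp (-u ^ 2 / 2) ≤ 1 := Real.exp_le_one_iff.mpr (by nlinarith [sq_nonneg u])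
      exact mul_le_one₀ this (auxF_nonneg _) (auxF_le_one _)
  have j0 := i0.const_mul (1 / 2)
  have j1 := i1.const_mul c
  have j2 := i2.const_mul (1 / 4)
  have j3 := i3.const_mul (k + k ^ 3)
  have j01 : Integrable (fun u : ℝ => 1 / 2 * (Real.exp (-(t * u)) * u ^ 0) +
      c * (Real.exp (-(t * u)) * u ^ 1)) (volume.restrict (Set.Ioi 0)) := j0.add j1
  have j012 : Integrable (fun u : ℝ => (1 / 2 * (Real.exp (-(t * u)) * u ^ 0) +
      c * (Real.exp (-(t * u)) * u ^ 1)) - 1 / 4 * (Real.exp (-(t * u)) * u ^ 2))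
      (volume.restrict (Set.Ioi 0)) := j01.sub j2
  have hp : ∫ u in Set.Ioi (0 : ℝ), ((1 / 2 * (Real.exp (-(t * u)) * u ^ 0) +
      c * (Real.exp (-(t * u)) * u ^ 1)) - 1 / 4 * (Real.exp (-(t * u)) * u ^ 2)) =
      1 / (2 * t) + k / (Real.sqrt (2 * Real.pi) * t ^ 2) - 1 / (2 * t ^ 3) := by
    rw [integral_sub j01 j2, integral_add j0 j1, integral_const_mul, integral_const_mul,
      integral_const_mul, v0, v1, v2, hc]
    simp [Nat.factorial]
    field_simp
    ring
  have hb : ∫ u in Set.Ioi (0 : ℝ), ((k + k ^ 3) * (Real.exp (-(t * u)) * u ^ 3) +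
      Real.exp (-(t * u)) * u ^ 4) = 6 * (k + k ^ 3) / t ^ 4 + 24 / t ^ 5 := by
    rw [integral_add j3 i4, integral_const_mul, v3, v4]
    simp [Nat.factorial]
    ring
  rw [← hp, ← integral_sub ig j012, ← Real.norm_eq_abs]
  refine (norm_integral_le_of_norm_le (j3.add i4) ?_).trans ?_
  · refine (ae_restrict_iff' measurableSet_Ioi).mpr (Filter.Eventually.of_forall fun u hu => ?_)
    have h := aux_point k u hk (le_of_lt hu)
    have hid : Real.exp (-(t * u)) * (Real.exp (-u ^ 2 / 2) * auxF (k * u)) -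
      ((1 / 2 * (Real.exp (-(t * u)) * u ^ 0) +
      c * (Real.exp (-(t * u)) * u ^ 1)) - 1 / 4 * (Real.exp (-(t * u)) * u ^ 2)) =
      Real.exp (-(t * u)) * (Real.exp (-u ^ 2 / 2) * auxF (k * u) -
      (1 / 2 + c * u - 1 / 4 * u ^ 2)) := by ring
    have h2 := mul_le_mul_of_nonneg_left h (Real.exp_pos (-(t * u))).le
    simp only [Pi.add_apply]
    rw [hid, Real.norm_eq_abs, abs_mul, abs_of_pos (Real.exp_pos _)]
    refine h2.trans (le_of_eq ?_)
    ring
  · refine (le_of_eq hb).trans ?_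
    rw [add_div]
    gcongr
    norm_num

/-- Bivariate normal upper-tail expansion: for `Z₁ = W₁`, `Z₂ = ρW₁ + √(1−ρ²)W₂` with `W₁, W₂`
independent standard normals and `k = ρ/√(1−ρ²)`, there exist `C > 0` and `t₀ > 0` such that for
all `t ≥ t₀`,
`|P(Z₁ ≥ t, Z₂ ≥ ρt) − φ(t)(1/(2t) + k/(√(2π)t²) − 1/(2t³))| ≤ C φ(t)/t⁴`. -/
theorem stmt9 {Ω : Type*} [MeasurableSpace Ω] (μ : Measure Ω) [IsProbabilityMeasure μ]
    (ρ : ℝ) (hρ0 : 0 < ρ) (hρ1 : ρ < 1)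
    (W₁ W₂ : Ω → ℝ) (hW₁ : Measurable W₁) (hW₂ : Measurable W₂)
    (hlaw₁ : μ.map W₁ = gaussianReal 0 1) (hlaw₂ : μ.map W₂ = gaussianReal 0 1)
    (hindep : IndepFun W₁ W₂ μ) :
    ∃ C > (0 : ℝ), ∃ t₀ > (0 : ℝ), ∀ t ≥ t₀,
      |(μ {ω | t ≤ W₁ ω ∧ ρ * t ≤ ρ * W₁ ω + Real.sqrt (1 - ρ ^ 2) * W₂ ω}).toReal -
          stdNormalPDF t * (1 / (2 * t) +
            (ρ / Real.sqrt (1 - ρ ^ 2)) / (Real.sqrt (2 * Real.pi) * t ^ 2) -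
            1 / (2 * t ^ 3))| ≤
        C * stdNormalPDF t / t ^ 4 := by
  have hs : 0 < Real.sqrt (1 - ρ ^ 2) := Real.sqrt_pos.mpr (by nlinarith)
  have hk : 0 < ρ / Real.sqrt (1 - ρ ^ 2) := div_pos hρ0 hs
  refine ⟨6 * (ρ / Real.sqrt (1 - ρ ^ 2) + (ρ / Real.sqrt (1 - ρ ^ 2)) ^ 3) + 24, by positivity,
    1, one_pos, fun t ht => ?_⟩
  have h := aux_main _ hk t ht
  have hφ : 0 < stdNormalPDF t := by unfold stdNormalPDF; positivity
  rw [aux_prob μ ρ hρ0 hρ1 W₁ W₂ hW₁ hW₂ hlaw₁ hlaw₂ hindep t, ← mul_sub, abs_mul, abs_of_pos hφ]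
  refine (mul_le_mul_of_nonneg_left h hφ.le).trans (le_of_eq ?_)
  ring
end

section
/- Let ρ ∈ (0, 1), k = ρ/√(1 − ρ²), and let W₁, W₂ be independent standard normal random variables with Z₁ = W₁ and Z₂ = ρW₁ + √(1 − ρ²)·W₂. Then for every t > 0, with F(w) = e^{−w²/2}·Φ(kw): (i) P(Z₁ ≥ t and Z₂ ≥ ρt) = φ(t) · ∫₀^∞ e^{−tw} F(w) dw, and (ii) E[ Z₁ · 1{Z₁ ≥ t and Z₂ ≥ ρt} ] = φ(t) · ∫₀^∞ e^{−tw} (t + w) F(w) dw. -/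
open MeasureTheory ProbabilityTheory

/-- The standard normal CDF `Φ(s) = ∫_{−∞}^s φ`. -/
noncomputable def stdNormalCDF (s : ℝ) : ℝ := ∫ x in Set.Iic s, stdNormalPDF x

lemma aux_cdf (a : ℝ) : (gaussianReal 0 1).real (Set.Ici (-a)) = stdNormalCDF a := by
  have h1 : (gaussianReal 0 1).real (Set.Ici (-a)) = (gaussianReal 0 1).real (Set.Iic a) := by
    have h := gaussianReal_map_neg (μ := 0) (v := 1)
    rw [neg_zero] at h
    conv_lhs => rw [← h]
    rw [map_measureReal_apply (by fun_prop) measurableSet_Ici]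
    congr 1
    ext x
    simp
  rw [h1, measureReal_def, gaussianReal_apply_eq_integral 0 one_ne_zero, ENNReal.toReal_ofReal]
  · simp only [aux_pdf, stdNormalCDF]
  · exact integral_nonneg fun x => gaussianPDFReal_nonneg _ _ _

lemma aux_main_s11 {Ω : Type*} [MeasurableSpace Ω] (μ : Measure Ω) [IsProbabilityMeasure μ]
    (ρ : ℝ) (hρ0 : 0 < ρ) (hρ1 : ρ < 1)
    (W₁ W₂ : Ω → ℝ) (hW₁ : Measurable W₁) (hW₂ : Measurable W₂)
    (hlaw₁ : μ.map W₁ = gaussianReal 0 1) (hlaw₂ : μ.map W₂ = gaussianReal 0 1)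
    (hindep : IndepFun W₁ W₂ μ) (t : ℝ) (g : ℝ → ℝ) (hg : Measurable g)
    (hgi : Integrable g (gaussianReal 0 1)) :
    (∫ ω in {ω | t ≤ W₁ ω ∧ ρ * t ≤ ρ * W₁ ω + Real.sqrt (1 - ρ ^ 2) * W₂ ω}, g (W₁ ω) ∂μ) =
      stdNormalPDF t *
        ∫ w in Set.Ioi (0 : ℝ), Real.exp (-t * w) * g (t + w) *
          (Real.exp (-w ^ 2 / 2) * stdNormalCDF (ρ / Real.sqrt (1 - ρ ^ 2) * w)) := by
  have hs : 0 < Real.sqrt (1 - ρ ^ 2) := Real.sqrt_pos.2 (by nlinarith)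
  set s := Real.sqrt (1 - ρ ^ 2) with hsdef
  set A : Set (ℝ × ℝ) := {p | t ≤ p.1 ∧ ρ * t ≤ ρ * p.1 + s * p.2} with hA
  have hAm : MeasurableSet A :=
    (measurableSet_le measurable_const measurable_fst).inter
      (measurableSet_le measurable_const
        ((measurable_fst.const_mul ρ).add (measurable_snd.const_mul s)))
  have hmap : μ.map (fun ω => (W₁ ω, W₂ ω)) = (gaussianReal 0 1).prod (gaussianReal 0 1) := by
    rw [(indepFun_iff_map_prod_eq_prod_map_map hW₁.aemeasurable hW₂.aemeasurable).1 hindep,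
      hlaw₁, hlaw₂]
  have h1 : (∫ ω in {ω | t ≤ W₁ ω ∧ ρ * t ≤ ρ * W₁ ω + s * W₂ ω}, g (W₁ ω) ∂μ)
      = ∫ p in A, g p.1 ∂((gaussianReal 0 1).prod (gaussianReal 0 1)) := by
    rw [← hmap]
    exact (setIntegral_map hAm (hg.comp measurable_fst).aestronglyMeasurable
      (hW₁.prodMk hW₂).aemeasurable).symm
  have h2 : ∀ x : ℝ, (∫ y, A.indicator (fun p => g p.1) (x, y) ∂(gaussianReal 0 1))
      = (Set.Ici t).indicator (fun x => g x * stdNormalCDF (ρ / s * (x - t))) x := by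
    intro x
    by_cases hx : t ≤ x
    · have : (fun y => A.indicator (fun p => g p.1) (x, y))
          = (Set.Ici (-(ρ / s * (x - t)))).indicator (fun _ => g x) := by
        ext y
        have : (x, y) ∈ A ↔ y ∈ Set.Ici (-(ρ / s * (x - t))) := by
          simp only [hA, Set.mem_setOf_eq, hx, true_and, Set.mem_Ici]
          have e : -(ρ / s * (x - t)) = (ρ * t - ρ * x) / s := by field_simp; ring
          rw [e, div_le_iff₀ hs]
          constructor <;> intro h <;> linarith
        by_cases hy : (x, y) ∈ A
        · rw [Set.indicator_of_mem hy, Set.indicator_of_mem (this.1 hy)]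
        · rw [Set.indicator_of_notMem hy, Set.indicator_of_notMem (fun h => hy (this.2 h))]
      rw [this, integral_indicator_const _ measurableSet_Ici, aux_cdf,
        Set.indicator_of_mem (Set.mem_Ici.2 hx), smul_eq_mul, mul_comm]
    · rw [Set.indicator_of_notMem (by simpa using hx)]
      have : ∀ y, A.indicator (fun p => g p.1) (x, y) = 0 := fun y =>
        Set.indicator_of_notMem (fun h => hx h.1) _
      simp [this]
  rw [h1, ← integral_indicator hAm, integral_prod]
  · simp_rw [h2]
    rw [integral_gaussianReal_eq_integral_smul one_ne_zero]
    simp_rw [aux_pdf, smul_eq_mul]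
    rw [← integral_add_right_eq_self _ t, ← integral_const_mul, ← integral_Ici_eq_integral_Ioi,
      ← integral_indicator measurableSet_Ici]
    congr 1
    ext w
    by_cases hw : 0 ≤ w
    · rw [Set.indicator_of_mem (by simpa using hw), Set.indicator_of_mem (by simpa using hw)]
      have e : stdNormalPDF (w + t) = stdNormalPDF t * (Real.exp (-t * w) * Real.exp (-w ^ 2 / 2)) := by
        simp only [stdNormalPDF]
        rw [← Real.exp_add, div_mul_eq_mul_div, ← Real.exp_add]
        ring_nf
      rw [e, add_sub_cancel_right, add_comm t w]
      ring
    · rw [Set.indicator_of_notMem (by simpa using hw), Set.indicator_of_notMem (by simpa using hw)]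
      simp
  · exact (hgi.comp_fst _).indicator hAm

/-- Laplace-transform representation of bivariate normal tails: for `Z₁ = W₁`,
`Z₂ = ρW₁ + √(1−ρ²)W₂` with `W₁, W₂` independent standard normals, `k = ρ/√(1−ρ²)` and
`F(w) = e^{−w²/2} Φ(kw)`, one has for every `t > 0`:
(i) `P(Z₁ ≥ t, Z₂ ≥ ρt) = φ(t) ∫₀^∞ e^{−tw} F(w) dw`, and
(ii) `E[Z₁ 1{Z₁ ≥ t, Z₂ ≥ ρt}] = φ(t) ∫₀^∞ e^{−tw} (t + w) F(w) dw`. -/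
theorem stmt11 {Ω : Type*} [MeasurableSpace Ω] (μ : Measure Ω) [IsProbabilityMeasure μ]
    (ρ : ℝ) (hρ0 : 0 < ρ) (hρ1 : ρ < 1)
    (W₁ W₂ : Ω → ℝ) (hW₁ : Measurable W₁) (hW₂ : Measurable W₂)
    (hlaw₁ : μ.map W₁ = gaussianReal 0 1) (hlaw₂ : μ.map W₂ = gaussianReal 0 1)
    (hindep : IndepFun W₁ W₂ μ)
    (t : ℝ) (ht : 0 < t) :
    (μ {ω | t ≤ W₁ ω ∧ ρ * t ≤ ρ * W₁ ω + Real.sqrt (1 - ρ ^ 2) * W₂ ω}).toReal =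
      stdNormalPDF t *
        ∫ w in Set.Ioi (0 : ℝ), Real.exp (-t * w) *
          (Real.exp (-w ^ 2 / 2) * stdNormalCDF (ρ / Real.sqrt (1 - ρ ^ 2) * w)) ∧
    (∫ ω in {ω | t ≤ W₁ ω ∧ ρ * t ≤ ρ * W₁ ω + Real.sqrt (1 - ρ ^ 2) * W₂ ω}, W₁ ω ∂μ) =
      stdNormalPDF t *
        ∫ w in Set.Ioi (0 : ℝ), Real.exp (-t * w) * (t + w) *
          (Real.exp (-w ^ 2 / 2) * stdNormalCDF (ρ / Real.sqrt (1 - ρ ^ 2) * w)) := by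
  refine ⟨?_, ?_⟩
  · have h := aux_main_s11 μ ρ hρ0 hρ1 W₁ W₂ hW₁ hW₂ hlaw₁ hlaw₂ hindep t (fun _ => 1)
      measurable_const (integrable_const _)
    simpa [measureReal_def] using h
  · exact aux_main_s11 μ ρ hρ0 hρ1 W₁ W₂ hW₁ hW₂ hlaw₁ hlaw₂ hindep t (fun x => x)
      measurable_id ((memLp_id_gaussianReal' 1 (by simp)).integrable le_rfl)
end

section
/- Let m be a positive integer and let W and Z be random vectors in ℝ^m defined on a common probability space, where Z has a centered Gaussian law N(0, Σ). Let A ⊆ ℝ^m be a nonempty convex Borel set with 0 < P(Z ∉ A) < 1, and set s_A = log(1/P(Z ∉ A)) > 0. Fix constants α > 0, A₀ > 0, Δ ∈ (0, 1), ε₀ > 0, put p = |log Δ| + s_A and ε* = e·A₀·p^α·Δ, and suppose: (i) E[ ‖W − Z‖^p ] ≤ (A₀ p^α Δ)^p; (ii) ε* ≤ ε₀; and (iii) there is a nondecreasing function r_A : (0, ε₀] → [0, ∞) such that P(Z ∈ A_ε \ A_{−ε}) / P(Z ∉ A) ≤ r_A(ε) for all 0 < ε ≤ ε₀, where A_ε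 = {x ∈ ℝ^m : dist(x, A) ≤ ε} and A_{−ε} = {x ∈ ℝ^m : dist(x, A^c) > ε}. Then | P(W ∉ A)/P(Z ∉ A) − 1 | ≤ r_A(ε*) + Δ. -/
open MeasureTheory ProbabilityTheory

/-- Comparison of non-Gaussian and Gaussian tail probabilities of convex sets under a coupling
moment bound: if `Z` is a centered Gaussian vector `N(0, Σ)`, `A` is a nonempty convex Borel set
with `0 < P(Z ∉ A) < 1`, `s_A = log(1/P(Z ∉ A))`, `p = |log Δ| + s_A`,
`ε* = e · A₀ · p^α · Δ`, `E[‖W − Z‖^p] ≤ (A₀ p^α Δ)^p`, `ε* ≤ ε₀`, and `r_A` is a nondecreasing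
boundary-strip control on `(0, ε₀]`, then `|P(W ∉ A)/P(Z ∉ A) − 1| ≤ r_A(ε*) + Δ`. -/
theorem stmt18 (m : ℕ) (hm : 0 < m)
    {Ω : Type*} [MeasurableSpace Ω] (μ : Measure Ω) [IsProbabilityMeasure μ]
    (W Z : Ω → EuclideanSpace ℝ (Fin m)) (hW : Measurable W) (hZ : Measurable Z)
    (Cov : Matrix (Fin m) (Fin m) ℝ)
    (hZlaw : ∀ v : EuclideanSpace ℝ (Fin m),
      μ.map (fun ω => ∑ i, v i * Z ω i) =
        gaussianReal 0 (∑ i, ∑ j, v i * Cov i j * v j).toNNReal)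
    (A : Set (EuclideanSpace ℝ (Fin m))) (hA : A.Nonempty) (hAconv : Convex ℝ A)
    (hAmeas : MeasurableSet A)
    (hPZpos : 0 < (μ {ω | Z ω ∉ A}).toReal) (hPZlt : (μ {ω | Z ω ∉ A}).toReal < 1)
    (α A₀ Δ ε₀ : ℝ) (hα : 0 < α) (hA₀ : 0 < A₀) (hΔ0 : 0 < Δ) (hΔ1 : Δ < 1) (hε₀ : 0 < ε₀)
    (p εstar : ℝ)
    (hp : p = |Real.log Δ| + Real.log (1 / (μ {ω | Z ω ∉ A}).toReal))
    (hεstar : εstar = Real.exp 1 * A₀ * p ^ α * Δ)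
    (hmoment : (∫⁻ ω, ENNReal.ofReal (‖W ω - Z ω‖ ^ p) ∂μ) ≤
      ENNReal.ofReal ((A₀ * p ^ α * Δ) ^ p))
    (hεstar₀ : εstar ≤ ε₀)
    (rA : ℝ → ℝ)
    (hrA_nonneg : ∀ ε : ℝ, 0 < ε → ε ≤ ε₀ → 0 ≤ rA ε)
    (hrA_mono : ∀ ε₁ ε₂ : ℝ, 0 < ε₁ → ε₁ ≤ ε₂ → ε₂ ≤ ε₀ → rA ε₁ ≤ rA ε₂)
    (hrA_strip : ∀ ε : ℝ, 0 < ε → ε ≤ ε₀ →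
      (μ {ω | Z ω ∈ {x | Metric.infDist x A ≤ ε} \ {x | ε < Metric.infDist x Aᶜ}}).toReal /
          (μ {ω | Z ω ∉ A}).toReal ≤ rA ε) :
    |(μ {ω | W ω ∉ A}).toReal / (μ {ω | Z ω ∉ A}).toReal - 1| ≤ rA εstar + Δ := by
  
  set a : ℝ := (μ {ω | Z ω ∉ A}).toReal with ha
  have hlogΔ : Real.log Δ < 0 := Real.log_neg hΔ0 hΔ1
  have hloga : Real.log a < 0 := Real.log_neg hPZpos hPZlt
  have hp' : p = -Real.log Δ - Real.log a := by
    rw [hp, abs_of_neg hlogΔ, one_div, Real.log_inv]; ring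
  have hppos : 0 < p := by linarith
  have hB : 0 < A₀ * p ^ α * Δ := by positivity
  set B := A₀ * p ^ α * Δ with hBdef
  have hεB : εstar = Real.exp 1 * B := by rw [hεstar, hBdef]; ring
  have hεpos : 0 < εstar := by rw [hεB]; positivity
  have hexp : Real.exp (-p) = Δ * a := by
    rw [hp', show -(-Real.log Δ - Real.log a) = Real.log Δ + Real.log a by ring,
      Real.exp_add, Real.exp_log hΔ0, Real.exp_log hPZpos]
  have hεp : εstar ^ p = Real.exp p * B ^ p := by
    rw [hεB, Real.mul_rpow (Real.exp_pos _).le hB.le, ← Real.exp_mul, one_mul]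
  -- Markov
  set D : Set Ω := {ω | εstar ≤ ‖W ω - Z ω‖} with hD
  have hmeasf : Measurable (fun ω => ENNReal.ofReal (‖W ω - Z ω‖ ^ p)) := by fun_prop
  have hmarkov : (μ D).toReal ≤ Δ * a := by
    have h1 := mul_meas_ge_le_lintegral (μ := μ) hmeasf (ENNReal.ofReal (εstar ^ p))
    have hsub : D ⊆ {ω | ENNReal.ofReal (εstar ^ p) ≤ ENNReal.ofReal (‖W ω - Z ω‖ ^ p)} := by
      intro ω hω
      exact ENNReal.ofReal_le_ofReal (Real.rpow_le_rpow hεpos.le hω hppos.le)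
    have h2 : ENNReal.ofReal (εstar ^ p) * μ D ≤ ENNReal.ofReal (B ^ p) :=
      (mul_le_mul_right (measure_mono hsub) _).trans (h1.trans hmoment)
    have h3 := ENNReal.toReal_mono ENNReal.ofReal_ne_top h2
    rw [ENNReal.toReal_mul, ENNReal.toReal_ofReal (by positivity),
      ENNReal.toReal_ofReal (by positivity), hεp] at h3
    have hBp : 0 < B ^ p := by positivity
    have h4 : Real.exp p * (μ D).toReal ≤ 1 := by
      by_contra hc
      push Not at hc
      nlinarith
    rw [← hexp, Real.exp_neg, ← one_div, le_div_iff₀ (Real.exp_pos p)]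
    linarith
  set S : Set Ω := {ω | Z ω ∈ {x | Metric.infDist x A ≤ εstar} \
    {x | εstar < Metric.infDist x Aᶜ}} with hS
  have hstrip : (μ S).toReal ≤ rA εstar * a := by
    have := hrA_strip εstar hεpos hεstar₀
    rwa [div_le_iff₀ hPZpos] at this
  have hunion : ∀ X : Set Ω, (μ (X ∪ S ∪ D)).toReal ≤
      (μ X).toReal + (μ S).toReal + (μ D).toReal := by
    intro X
    have h1 := measureReal_union_le (μ := μ) (X ∪ S) D
    have h2 := measureReal_union_le (μ := μ) X S
    simp only [Measure.real] at h1 h2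
    linarith
  have hup : (μ {ω | W ω ∉ A}).toReal ≤ a + (μ S).toReal + (μ D).toReal := by
    refine le_trans (ENNReal.toReal_mono (measure_ne_top _ _) (measure_mono ?_)) (hunion _)
    intro ω hω
    by_cases h1 : Z ω ∈ A
    · by_cases h2 : εstar ≤ ‖W ω - Z ω‖
      · exact Or.inr h2
      · refine Or.inl (Or.inr ⟨?_, ?_⟩)
        · change Metric.infDist (Z ω) A ≤ εstar
          rw [Metric.infDist_zero_of_mem h1]; exact hεpos.le
        · change ¬ (εstar < Metric.infDist (Z ω) Aᶜ)
          have := Metric.infDist_le_dist_of_mem (x := Z ω) (show W ω ∈ Aᶜ from hω)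
          rw [dist_comm, dist_eq_norm] at this
          linarith
    · exact Or.inl (Or.inl h1)
  have hdown : a ≤ (μ {ω | W ω ∉ A}).toReal + (μ S).toReal + (μ D).toReal := by
    refine le_trans (ENNReal.toReal_mono (measure_ne_top _ _) (measure_mono ?_)) (hunion _)
    intro ω hω
    by_cases h1 : W ω ∈ A
    · by_cases h2 : εstar ≤ ‖W ω - Z ω‖
      · exact Or.inr h2
      · refine Or.inl (Or.inr ⟨?_, ?_⟩)
        · change Metric.infDist (Z ω) A ≤ εstar
          have := Metric.infDist_le_dist_of_mem (x := Z ω) h1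
          rw [dist_comm, dist_eq_norm] at this
          linarith
        · change ¬ (εstar < Metric.infDist (Z ω) Aᶜ)
          rw [Metric.infDist_zero_of_mem (show Z ω ∈ Aᶜ from hω)]
          linarith
    · exact Or.inl (Or.inl h1)
  have hdiv : (μ {ω | W ω ∉ A}).toReal / a - 1 = ((μ {ω | W ω ∉ A}).toReal - a) / a := by
    field_simp
  rw [hdiv, abs_div, abs_of_pos hPZpos, div_le_iff₀ hPZpos, abs_le]
  constructor <;> linarith
end
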